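/- Let b > 0, let l ≥ -1/2 be real, and let f be continuous on [0,b]. Then: (i) lim_{x→0⁺} (Y_l f)(x) = 0 for every l ≥ -1/2; (ii) if l > 0, then lim_{x→0⁺} (Y_l f)'(x) = 0; (iii) if l = 0, then lim_{x→0⁺} (Y_0 f)'(x) = √(2/π) · f(0). -/

import Mathlib

/-!
After the substitution `s = x t`, the integral in `(Y_l f)(x)` is `x ^ (2l+1)` times the integral of
`(1 - t²) ^ l f(x t)` over `[0,1]`, so `(Y_l f)(x) = O(x ^ (l+1))`.

For `l > 0` one cannot differentiate under the integral sign directly: for `l < 1` the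
`x`-derivative of the kernel is unbounded at `s = x`, and after the substitution `f` itself, which
need not be differentiable, depends on `x`. Integrating by parts once in `t` replaces `f` by its
primitive `F` and gives `(Y_l f)(x) = c x ^ l ∫₀¹ w(t) F(x t) dt`, where
`w(t) = 2 l t (1 - t²) ^ (l-1)` is a probability density. Differentiating this is harmless, and
`|F(x t)| ≤ M x` yields `(Y_l f)'(x) = O(x ^ l)`. For `l = 0`, `Y_0 f` is `√(2/π)` times `F` itself.
-/

open Filter MeasureTheory Set Topology

lemma tendsto_nhdsGT_zero_of_norm_le_mul_rpow {E : Type*} [SeminormedAddCommGroup E]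
    {b p K : ℝ} {g : ℝ → E} (hb : 0 < b) (hp : 0 < p)
    (hg : ∀ x ∈ Ioo 0 b, ‖g x‖ ≤ K * x ^ p) : Tendsto g (𝓝[>] 0) (𝓝 0) := by
  have hpow : Tendsto (fun x : ℝ ↦ K * x ^ p) (𝓝 0) (𝓝 0) := by
    simpa [Real.zero_rpow hp.ne'] using
      ((Real.continuousAt_rpow_const 0 p (.inr hp.le)).const_mul K).tendsto
  refine squeeze_zero_norm' ?_ (hpow.mono_left nhdsWithin_le_nhds)
  filter_upwards [Ioo_mem_nhdsGT hb] using hg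

section Integral

variable {E : Type*} [NormedAddCommGroup E] [NormedSpace ℝ E]

lemma norm_intervalIntegral_smul_le {a b M : ℝ} {w : ℝ → ℝ} {g : ℝ → E} (hab : a ≤ b)
    (hw : IntervalIntegrable w volume a b) (hw₀ : ∀ t ∈ Ioc a b, 0 ≤ w t)
    (hg : ∀ t ∈ Ioc a b, ‖g t‖ ≤ M) :
    ‖∫ t in a..b, w t • g t‖ ≤ M * ∫ t in a..b, w t := by
  rw [← intervalIntegral.integral_const_mul]
  refine intervalIntegral.norm_integral_le_of_norm_le hab (.of_forall fun t ht ↦ ?_)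
    (hw.const_mul M)
  rw [norm_smul, Real.norm_of_nonneg (hw₀ t ht), mul_comm]
  exact mul_le_mul_of_nonneg_right (hg t ht) (hw₀ t ht)

lemma hasDerivAt_integral_smul_comp_mul {a b : ℝ} {w : ℝ → ℝ} {F f : ℝ → E}
    (hw : IntervalIntegrable w volume a b) (hF : ∀ y, HasDerivAt F (f y) y) (hf : Continuous f)
    (x : ℝ) :
    HasDerivAt (fun y ↦ ∫ t in a..b, w t • F (y * t)) (∫ t in a..b, w t • t • f (x * t)) x := by
  have hFc : Continuous F := continuous_iff_continuousAt.2 fun y ↦ (hF y).continuousAt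
  have hint : ∀ y, IntervalIntegrable (fun t ↦ w t • F (y * t)) volume a b := fun y ↦
    hw.smul_continuousOn (by fun_prop)
  have hint' : IntervalIntegrable (fun t ↦ w t • t • f (x * t)) volume a b :=
    hw.smul_continuousOn (by fun_prop)
  have hK : IsCompact (Metric.closedBall x 1 ×ˢ uIcc a b) :=
    (isCompact_closedBall x 1).prod isCompact_uIcc
  obtain ⟨C, hC⟩ := hK.exists_bound_of_continuousOn
    (f := fun p ↦ p.2 • f (p.1 * p.2)) (by fun_prop)
  refine (intervalIntegral.hasDerivAt_integral_of_dominated_loc_of_deriv_le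
    (F' := fun y t ↦ w t • t • f (y * t)) (bound := fun t ↦ ‖w t‖ * C)
    (Metric.ball_mem_nhds x one_pos) (.of_forall fun y ↦ (hint y).def'.aestronglyMeasurable)
    (hint x) hint'.def'.aestronglyMeasurable (.of_forall fun t ht y hy ↦ ?_)
    (hw.norm.mul_const C) (.of_forall fun t _ y _ ↦ ?_)).2
  · rw [norm_smul]
    gcongr
    exact hC (y, t) ⟨Metric.ball_subset_closedBall hy, uIoc_subset_uIcc ht⟩
  · exact ((hF (y * t)).scomp y (hasDerivAt_mul_const t)).const_smul (w t)

end Integral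

section Weight

lemma one_sub_sq_nonneg {t : ℝ} (ht : t ∈ Icc 0 1) : 0 ≤ 1 - t ^ 2 :=
  sub_nonneg.2 (pow_le_one₀ ht.1 ht.2)

lemma intervalIntegrable_one_sub_sq_rpow {l : ℝ} (hl : -1 < l) :
    IntervalIntegrable (fun t : ℝ ↦ (1 - t ^ 2) ^ l) volume 0 1 := by
  have hsub : IntervalIntegrable (fun t : ℝ ↦ (1 - t) ^ l) volume 0 1 := by
    simpa using
      ((intervalIntegral.intervalIntegrable_rpow' (a := 0) (b := 1) hl).comp_sub_left 1).symm
  have hadd : ContinuousOn (fun t : ℝ ↦ (1 + t) ^ l) (uIcc 0 1) := by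
    rw [uIcc_of_le zero_le_one]
    exact .rpow_const (by fun_prop) fun t ht ↦ .inl (by linarith [ht.1])
  refine (hsub.mul_continuousOn hadd).congr fun t ht ↦ ?_
  obtain ⟨ht₀, ht₁⟩ : 0 < t ∧ t ≤ 1 := by simpa using ht
  rw [← Real.mul_rpow (by linarith) (by linarith)]
  ring_nf

/-- The weight `w(t) = 2 l t (1 - t²) ^ (l-1)`, minus the derivative of `(1 - t²) ^ l`. It is the
density left after one integration by parts; for `l > 0` it is a probability density on `[0,1]`. -/
noncomputable def poissonWeight (l t : ℝ) : ℝ := 2 * l * t * (1 - t ^ 2) ^ (l - 1)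

variable {l : ℝ}

lemma poissonWeight_nonneg {t : ℝ} (hl : 0 ≤ l) (ht : t ∈ Ioc 0 1) : 0 ≤ poissonWeight l t :=
  mul_nonneg (mul_nonneg (by positivity) ht.1.le)
    (Real.rpow_nonneg (one_sub_sq_nonneg (Ioc_subset_Icc_self ht)) _)

lemma intervalIntegrable_poissonWeight (hl : 0 < l) :
    IntervalIntegrable (poissonWeight l) volume 0 1 :=
  (intervalIntegrable_one_sub_sq_rpow (by linarith)).continuousOn_mul (by fun_prop)

lemma hasDerivAt_one_sub_sq_rpow (l : ℝ) {t : ℝ} (ht : t ∈ Ioo 0 1) :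
    HasDerivAt (fun t : ℝ ↦ (1 - t ^ 2) ^ l) (-poissonWeight l t) t := by
  have hpos : 1 - t ^ 2 ≠ 0 := (sub_pos.2 (pow_lt_one₀ ht.1.le ht.2 two_ne_zero)).ne'
  convert ((hasDerivAt_pow 2 t).const_sub 1).rpow_const (p := l) (.inl hpos) using 1
  simp only [poissonWeight]
  push_cast
  ring

lemma integral_one_sub_sq_rpow_smul_deriv {E : Type*} [NormedAddCommGroup E] [NormedSpace ℝ E]
    [CompleteSpace E] {v v' : ℝ → E} (hl : 0 < l) (hv : ∀ t, HasDerivAt v (v' t) t)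
    (hv' : Continuous v') :
    ∫ t in (0 : ℝ)..1, (1 - t ^ 2) ^ l • v' t =
      (∫ t in (0 : ℝ)..1, poissonWeight l t • v t) - v 0 := by
  have hu : Continuous fun t : ℝ ↦ (1 - t ^ 2) ^ l :=
    .rpow_const (by fun_prop) fun _ ↦ .inr hl.le
  have hparts := intervalIntegral.integral_smul_deriv_eq_deriv_smul_of_hasDerivAt
    hu.continuousOn (fun t _ ↦ (hv t).continuousAt.continuousWithinAt)
    (fun t ht ↦ hasDerivAt_one_sub_sq_rpow l (by simpa using ht)) (fun t _ ↦ hv t)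
    (intervalIntegrable_poissonWeight hl).neg (hv'.intervalIntegrable 0 1)
  rw [hparts]
  simp [Real.zero_rpow hl.ne', neg_add_eq_sub]

lemma integral_poissonWeight (hl : 0 < l) : ∫ t in (0 : ℝ)..1, poissonWeight l t = 1 := by
  have h := integral_one_sub_sq_rpow_smul_deriv hl (fun t ↦ hasDerivAt_const t (1 : ℝ))
    continuous_const
  simp only [smul_eq_mul, mul_zero, mul_one, intervalIntegral.integral_zero] at h
  linarith

lemma norm_integral_poissonWeight_smul_le {E : Type*} [NormedAddCommGroup E] [NormedSpace ℝ E]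
    {g : ℝ → E} {M : ℝ} (hl : 0 < l) (hg : ∀ t ∈ Ioc 0 1, ‖g t‖ ≤ M) :
    ‖∫ t in (0 : ℝ)..1, poissonWeight l t • g t‖ ≤ M := by
  simpa [integral_poissonWeight hl] using norm_intervalIntegral_smul_le zero_le_one
    (intervalIntegrable_poissonWeight hl) (fun _ ↦ poissonWeight_nonneg hl.le) hg

end Weight

/-- The normalising constant `2 ^ (l+1/2) Γ(l+3/2)` of `Y_l`. -/
noncomputable def poissonConst (l : ℝ) : ℝ := 2 ^ (l + 1 / 2) * Real.Gamma (l + 3 / 2)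

/-- The operator `Y_l`, on vector-valued functions: a Poisson-type transmutation operator. -/
noncomputable def poissonTransform {E : Type*} [NormedAddCommGroup E] [NormedSpace ℝ E] (l : ℝ)
    (f : ℝ → E) (x : ℝ) : E :=
  (x ^ (-l) / poissonConst l) • ∫ s in (0 : ℝ)..x, (x ^ 2 - s ^ 2) ^ l • f s

lemma poissonConst_pos {l : ℝ} (hl : -(3 / 2) < l) : 0 < poissonConst l :=
  mul_pos (by positivity) (Real.Gamma_pos_of_pos (by linarith))

lemma inv_poissonConst_zero : (poissonConst 0)⁻¹ = √(2 / Real.pi) := by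
  have hΓ : Real.Gamma (3 / 2) = √Real.pi / 2 := by
    rw [show (3 / 2 : ℝ) = 1 / 2 + 1 by norm_num, Real.Gamma_add_one (by norm_num),
      Real.Gamma_one_half_eq]
    ring
  have hconst : poissonConst 0 = √2 * (√Real.pi / 2) := by
    rw [poissonConst, zero_add, zero_add, hΓ, ← Real.sqrt_eq_rpow]
  rw [hconst, Real.sqrt_div zero_le_two]
  field_simp
  exact (Real.sq_sqrt zero_le_two).symm

section PoissonTransform

variable {E : Type*} [NormedAddCommGroup E] [NormedSpace ℝ E] {f : ℝ → E} {b l x M : ℝ}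

lemma poissonTransform_eq_smul_integral (l : ℝ) (f : ℝ → E) (hx : 0 < x) :
    poissonTransform l f x =
      (x ^ (l + 1) / poissonConst l) • ∫ t in (0 : ℝ)..1, (1 - t ^ 2) ^ l • f (x * t) := by
  have hscale : ∫ s in (0 : ℝ)..x, (x ^ 2 - s ^ 2) ^ l • f s =
      x • ∫ t in (0 : ℝ)..1, (x ^ 2 - (x * t) ^ 2) ^ l • f (x * t) := by
    simpa using (intervalIntegral.smul_integral_comp_mul_left (a := 0) (b := 1)
      (fun s ↦ (x ^ 2 - s ^ 2) ^ l • f s) x).symm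
  have hhomogeneous : ∫ t in (0 : ℝ)..1, (x ^ 2 - (x * t) ^ 2) ^ l • f (x * t) =
      x ^ (2 * l) • ∫ t in (0 : ℝ)..1, (1 - t ^ 2) ^ l • f (x * t) := by
    rw [← intervalIntegral.integral_smul]
    refine intervalIntegral.integral_congr fun t ht ↦ ?_
    rw [uIcc_of_le zero_le_one] at ht
    rw [show x ^ 2 - (x * t) ^ 2 = x ^ 2 * (1 - t ^ 2) by ring,
      Real.mul_rpow (by positivity) (one_sub_sq_nonneg ht), Real.rpow_mul hx.le, Real.rpow_two,
      mul_smul]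
  have hexp : x ^ (l + 1) = x ^ (-l) * x ^ (2 * l) * x := by
    rw [← Real.rpow_add hx, ← Real.rpow_add_one hx.ne']
    ring_nf
  rw [poissonTransform, hscale, hhomogeneous, smul_smul, smul_smul, hexp]
  ring_nf

lemma poissonTransform_eqOn_of_eqOn {g : ℝ → E} (l : ℝ) (hfg : EqOn f g (Icc 0 b)) :
    EqOn (poissonTransform l f) (poissonTransform l g) (Icc 0 b) := by
  intro x hx
  simp only [poissonTransform]
  congr 1
  refine intervalIntegral.integral_congr fun s hs ↦ ?_
  rw [uIcc_of_le hx.1] at hs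
  simp only [hfg ⟨hs.1, hs.2.trans hx.2⟩]

lemma norm_poissonTransform_le (hl : -1 < l) (hx : 0 < x) (hM : ∀ s ∈ Icc 0 x, ‖f s‖ ≤ M) :
    ‖poissonTransform l f x‖ ≤
      M * (∫ t in (0 : ℝ)..1, (1 - t ^ 2) ^ l) / poissonConst l * x ^ (l + 1) := by
  have hc := poissonConst_pos (l := l) (by linarith)
  have hmean : ‖∫ t in (0 : ℝ)..1, (1 - t ^ 2) ^ l • f (x * t)‖ ≤
      M * ∫ t in (0 : ℝ)..1, (1 - t ^ 2) ^ l :=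
    norm_intervalIntegral_smul_le zero_le_one (intervalIntegrable_one_sub_sq_rpow hl)
      (fun t ht ↦ Real.rpow_nonneg (one_sub_sq_nonneg (Ioc_subset_Icc_self ht)) l)
      fun t ht ↦ hM _ ⟨mul_nonneg hx.le ht.1.le, mul_le_of_le_one_right hx.le ht.2⟩
  rw [poissonTransform_eq_smul_integral l f hx, norm_smul, Real.norm_of_nonneg (by positivity)]
  calc x ^ (l + 1) / poissonConst l * ‖∫ t in (0 : ℝ)..1, (1 - t ^ 2) ^ l • f (x * t)‖
      ≤ x ^ (l + 1) / poissonConst l * (M * ∫ t in (0 : ℝ)..1, (1 - t ^ 2) ^ l) := by gcongr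
    _ = _ := by ring

lemma tendsto_poissonTransform_nhdsGT_zero (hl : -1 < l) (hb : 0 < b)
    (hM : ∀ s ∈ Icc 0 b, ‖f s‖ ≤ M) :
    Tendsto (poissonTransform l f) (𝓝[>] 0) (𝓝 0) :=
  tendsto_nhdsGT_zero_of_norm_le_mul_rpow hb (by linarith) fun _ hx ↦
    norm_poissonTransform_le hl hx.1 fun s hs ↦ hM s ⟨hs.1, hs.2.trans hx.2.le⟩

variable [CompleteSpace E]

lemma poissonTransform_eq_smul_integral_primitive (hl : 0 < l) (hf : Continuous f) (hx : 0 < x) :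
    poissonTransform l f x = (x ^ l / poissonConst l) •
      ∫ t in (0 : ℝ)..1, poissonWeight l t • ∫ s in (0 : ℝ)..(x * t), f s := by
  have hprimitive (t : ℝ) : HasDerivAt (fun t ↦ ∫ s in (0 : ℝ)..(x * t), f s) (x • f (x * t)) t :=
    (hf.integral_hasStrictDerivAt 0 (x * t)).hasDerivAt.scomp t (hasDerivAt_const_mul x)
  have hparts := integral_one_sub_sq_rpow_smul_deriv hl hprimitive (by fun_prop)
  simp only [mul_zero, intervalIntegral.integral_same, sub_zero, smul_comm _ x,
    intervalIntegral.integral_smul] at hparts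
  rw [poissonTransform_eq_smul_integral l f hx, ← hparts, smul_smul, Real.rpow_add_one hx.ne',
    mul_div_right_comm]

lemma hasDerivAt_poissonTransform (hl : 0 < l) (hf : Continuous f) (hx : 0 < x) :
    HasDerivAt (poissonTransform l f)
      ((x ^ l / poissonConst l) • (∫ t in (0 : ℝ)..1, poissonWeight l t • t • f (x * t)) +
        (l * x ^ (l - 1) / poissonConst l) •
          ∫ t in (0 : ℝ)..1, poissonWeight l t • ∫ s in (0 : ℝ)..(x * t), f s) x := by
  have hpow : HasDerivAt (fun y : ℝ ↦ y ^ l / poissonConst l)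
      (l * x ^ (l - 1) / poissonConst l) x :=
    (Real.hasDerivAt_rpow_const (.inl hx.ne')).div_const _
  have hint := hasDerivAt_integral_smul_comp_mul (intervalIntegrable_poissonWeight hl)
    (fun y ↦ (hf.integral_hasStrictDerivAt 0 y).hasDerivAt) hf x
  refine (hpow.smul hint).congr_of_eventuallyEq ?_
  filter_upwards [lt_mem_nhds hx] with y hy
  exact poissonTransform_eq_smul_integral_primitive hl hf hy

lemma norm_deriv_poissonTransform_le (hl : 0 < l) (hf : Continuous f) (hx : 0 < x)
    (hM : ∀ s ∈ Icc 0 x, ‖f s‖ ≤ M) :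
    ‖deriv (poissonTransform l f) x‖ ≤ (l + 1) * M / poissonConst l * x ^ l := by
  have hc := poissonConst_pos (l := l) (by linarith)
  have hmem {t : ℝ} (ht : t ∈ Ioc 0 1) : 0 ≤ x * t ∧ x * t ≤ x :=
    ⟨mul_nonneg hx.le ht.1.le, mul_le_of_le_one_right hx.le ht.2⟩
  have hM₀ : 0 ≤ M := (norm_nonneg _).trans (hM 0 ⟨le_rfl, hx.le⟩)
  have hvalue : ‖∫ t in (0 : ℝ)..1, poissonWeight l t • t • f (x * t)‖ ≤ M := by
    refine norm_integral_poissonWeight_smul_le hl fun t ht ↦ ?_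
    rw [norm_smul, Real.norm_of_nonneg ht.1.le]
    exact (mul_le_of_le_one_left (norm_nonneg _) ht.2).trans (hM _ (hmem ht))
  have hprimitive :
      ‖∫ t in (0 : ℝ)..1, poissonWeight l t • ∫ s in (0 : ℝ)..(x * t), f s‖ ≤ M * x := by
    refine norm_integral_poissonWeight_smul_le hl fun t ht ↦ ?_
    obtain ⟨h₀, h₁⟩ := hmem ht
    calc ‖∫ s in (0 : ℝ)..(x * t), f s‖ ≤ M * |x * t - 0| := by
          refine intervalIntegral.norm_integral_le_of_norm_le_const fun s hs ↦ ?_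
          rw [uIoc_of_le h₀] at hs
          exact hM s ⟨hs.1.le, hs.2.trans h₁⟩
      _ ≤ M * x := by
          rw [sub_zero, abs_of_nonneg h₀]
          gcongr
  rw [(hasDerivAt_poissonTransform hl hf hx).deriv]
  refine (norm_add_le _ _).trans ?_
  rw [norm_smul, norm_smul, Real.norm_of_nonneg (by positivity),
    Real.norm_of_nonneg (by positivity)]
  calc _ ≤ x ^ l / poissonConst l * M + l * x ^ (l - 1) / poissonConst l * (M * x) := by gcongr
    _ = x ^ l / poissonConst l * M + l * (x ^ (l - 1) * x) / poissonConst l * M := by ring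
    _ = (l + 1) * M / poissonConst l * x ^ l := by
      rw [← Real.rpow_add_one hx.ne', sub_add_cancel]
      ring

lemma tendsto_deriv_poissonTransform_nhdsGT_zero (hl : 0 < l) (hf : Continuous f) :
    Tendsto (deriv (poissonTransform l f)) (𝓝[>] 0) (𝓝 0) := by
  obtain ⟨M, hM⟩ := (isCompact_Icc (a := (0 : ℝ)) (b := 1)).exists_bound_of_continuousOn
    hf.continuousOn
  exact tendsto_nhdsGT_zero_of_norm_le_mul_rpow one_pos hl fun x hx ↦
    norm_deriv_poissonTransform_le hl hf hx.1 fun s hs ↦ hM s ⟨hs.1, hs.2.trans hx.2.le⟩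

lemma hasDerivAt_poissonTransform_zero (hf : Continuous f) (x : ℝ) :
    HasDerivAt (poissonTransform 0 f) (√(2 / Real.pi) • f x) x := by
  have h := (hf.integral_hasStrictDerivAt 0 x).hasDerivAt.const_smul √(2 / Real.pi)
  refine h.congr_of_eventuallyEq (.of_forall fun y ↦ ?_)
  simp [poissonTransform, inv_poissonConst_zero]

lemma tendsto_deriv_poissonTransform_zero_nhdsGT_zero (hf : Continuous f) :
    Tendsto (deriv (poissonTransform 0 f)) (𝓝[>] 0) (𝓝 (√(2 / Real.pi) • f 0)) := by
  rw [funext fun x ↦ (hasDerivAt_poissonTransform_zero hf x).deriv]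
  exact (hf.const_smul _).continuousAt.mono_left nhdsWithin_le_nhds

lemma differentiableAt_poissonTransform (hl : 0 ≤ l) (hf : Continuous f) (hx : 0 < x) :
    DifferentiableAt ℝ (poissonTransform l f) x := by
  rcases hl.eq_or_lt with rfl | hl
  · exact (hasDerivAt_poissonTransform_zero hf x).differentiableAt
  · exact (hasDerivAt_poissonTransform hl hf hx).differentiableAt

end PoissonTransform

theorem stmt_2_general {E : Type*} [NormedAddCommGroup E] [NormedSpace ℝ E] [CompleteSpace E]
    {b l : ℝ} (hb : 0 < b) (hl : -1 < l) {f : ℝ → E} (hf : ContinuousOn f (Icc 0 b)) :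
    Tendsto (poissonTransform l f) (𝓝[>] 0) (𝓝 0) ∧
    (0 ≤ l → DifferentiableOn ℝ (poissonTransform l f) (Ioo 0 b)) ∧
    (0 < l → Tendsto (deriv (poissonTransform l f)) (𝓝[>] 0) (𝓝 0)) ∧
    (l = 0 → Tendsto (deriv (poissonTransform l f)) (𝓝[>] 0) (𝓝 (√(2 / Real.pi) • f 0))) := by
  obtain ⟨M, hM⟩ := isCompact_Icc.exists_bound_of_continuousOn hf
  let g : ℝ → E := IccExtend hb.le ((Icc 0 b).domRestrict f)
  have hg : Continuous g := hf.domRestrict.Icc_extend'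
  have hfg : EqOn f g (Icc 0 b) := fun s hs ↦
    (IccExtend_of_mem hb.le ((Icc 0 b).domRestrict f) hs).symm
  have hY : EqOn (poissonTransform l f) (poissonTransform l g) (Ioo 0 b) :=
    (poissonTransform_eqOn_of_eqOn l hfg).mono Ioo_subset_Icc_self
  have hderiv : deriv (poissonTransform l g) =ᶠ[𝓝[>] 0] deriv (poissonTransform l f) := by
    filter_upwards [Ioo_mem_nhdsGT hb] with x hx
    exact (hY.eventuallyEq_of_mem (isOpen_Ioo.mem_nhds hx)).deriv_eq.symm
  refine ⟨tendsto_poissonTransform_nhdsGT_zero hl hb hM, fun hl₀ ↦ ?_, fun hl₀ ↦ ?_, ?_⟩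
  · refine DifferentiableOn.congr (fun x hx ↦ ?_) hY
    exact (differentiableAt_poissonTransform hl₀ hg hx.1).differentiableWithinAt
  · exact (tendsto_deriv_poissonTransform_nhdsGT_zero hl₀ hg).congr' hderiv
  · rintro rfl
    rw [hfg ⟨le_rfl, hb.le⟩]
    exact (tendsto_deriv_poissonTransform_zero_nhdsGT_zero hg).congr' hderiv

/-- Boundary behaviour of `Y_l f` and its derivative at `0⁺`. -/
theorem stmt_2 (b l : ℝ) (hb : 0 < b) (hl : -(1/2) ≤ l)
    (f : ℝ → ℝ) (hf : ContinuousOn f (Set.Icc 0 b))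
    (Y : ℝ → ℝ)
    (hY : ∀ x : ℝ, Y x = x ^ (-l) / (2 ^ (l + 1/2) * Real.Gamma (l + 3/2)) *
        ∫ s in (0:ℝ)..x, (x ^ 2 - s ^ 2) ^ l * f s) :
    Filter.Tendsto Y (nhdsWithin 0 (Set.Ioi 0)) (nhds 0) ∧
    (0 < l → Filter.Tendsto (deriv Y) (nhdsWithin 0 (Set.Ioi 0)) (nhds 0)) ∧
    (l = 0 → Filter.Tendsto (deriv Y) (nhdsWithin 0 (Set.Ioi 0))
      (nhds (Real.sqrt (2 / Real.pi) * f 0))) := by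
  obtain rfl : Y = poissonTransform l f := funext hY
  exact (stmt_2_general hb (by linarith) hf).imp_right And.right
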